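/- Let Φ : Mₙ(ℂ) → M_d(ℂ) be a unital positive linear map, A positive semidefinite, and p, q, r ≥ 0 with q ≥ p and q ≥ r. Then there exist unitaries U, V ∈ M_d(ℂ) such that |Φ(A^p)Φ(A^q)Φ(A^r)| ≤ (U Φ(A^{p+q+r}) U* + V Φ(A^{p+q+r}) V*)/2. -/

import Mathlib

open scoped Matrix ComplexOrder

/-- `A^p` for a matrix, via continuous functional calculus with the real power function. -/
noncomputable def mpow {n : ℕ} (A : Matrix (Fin n) (Fin n) ℂ) (p : ℝ) : Matrix (Fin n) (Fin n) ℂ :=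
  cfc (fun x : ℝ => x ^ p) A

/-- Matrix absolute value `|X| = (XᴴX)^{1/2}`. -/
noncomputable def matAbs {n : ℕ} (X : Matrix (Fin n) (Fin n) ℂ) : Matrix (Fin n) (Fin n) ℂ :=
  cfc Real.sqrt (Xᴴ * X)

/-- Loewner order: `X ≤ Y` iff `Y - X` is positive semidefinite. -/
def loewnerLE {n : ℕ} (X Y : Matrix (Fin n) (Fin n) ℂ) : Prop := (Y - X).PosSemidef

/-!
Diagonalising `A` turns `t ↦ Φ (A ^ t)` into `t ↦ F t := G (l ^ t)` with `G` a positive map on the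
commutative algebra `ι → ℝ`. Such a `G` makes the block matrix with rows `G (f * f)`, `G (f * g)`
and `G (f * g)`, `G (g * g)` positive semidefinite. Testing this block form, for
`f = l ^ ((q + r - p) / 2)` and `g = l ^ ((p + q - r) / 2)`, against `F p * W` and `- F r`, where
`X = F p * F q * F r = W * |X|` is a polar decomposition, gives
`2 • |X| ≤ Wᴴ * (F p * F (q + r - p) * F p) * W + F r * F (p + q - r) * F r`.

It remains to dominate `P * T * P`, where `P = F s` and `T = F t`, by a unitary conjugate of
`S = F (s + t + s)`, that is, to compare eigenvalues. Given `c > 0`, choose `μ` with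
`μ ^ (s + t + s) = c` and put `α = μ ^ t`, `β = μ ^ (s + s)`. Since
`(x ^ t - α) * (x ^ (s + s) - β) ≥ 0` for `x ≥ 0`, the Kadison inequality `P * P ≤ F (s + s)` yields
`β • (P * T * P - c) ≤ P * (S - c) * P`, and a dimension count as in Sylvester's law of inertia
shows that `S` has at least as many eigenvalues above `c` as `P * T * P`.
-/

section

open Matrix
open scoped MatrixOrder

variable {𝕜 n ι : Type*} [RCLike 𝕜]

theorem isHermitian_positiveLinearMap_apply (G : (ι → ℝ) →ₚ[ℝ] Matrix n n 𝕜) (f : ι → ℝ) :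
    (G f).IsHermitian := by
  have hpos := (nonneg_iff_posSemidef.1 (G.map_nonneg (posPart_nonneg f))).isHermitian
  have hneg := (nonneg_iff_posSemidef.1 (G.map_nonneg (negPart_nonneg f))).isHermitian
  rw [← posPart_sub_negPart f, map_sub]
  exact hpos.sub hneg

theorem positiveLinearMap_block_nonneg [Fintype n] [Finite ι]
    (G : (ι → ℝ) →ₚ[ℝ] Matrix n n 𝕜) (f g : ι → ℝ) (X Y : Matrix n n 𝕜) :
    0 ≤ Xᴴ * G (f * f) * X + Xᴴ * G (f * g) * Y + Yᴴ * G (f * g) * X + Yᴴ * G (g * g) * Y := by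
  classical
  cases nonempty_fintype ι
  let e (i : ι) : ι → ℝ := fun j => if i = j then 1 else 0
  have he (i : ι) : 0 ≤ e i := fun j => by dsimp only [e]; split_ifs <;> norm_num
  have map_eq_sum (h : ι → ℝ) : G h = ∑ i, h i • G (e i) := G.toLinearMap.pi_apply_eq_sum_univ h
  have hsum : Xᴴ * G (f * f) * X + Xᴴ * G (f * g) * Y + Yᴴ * G (f * g) * X +
      Yᴴ * G (g * g) * Y = ∑ i, (f i • X + g i • Y)ᴴ * G (e i) * (f i • X + g i • Y) := by
    simp only [map_eq_sum (_ * _), Finset.mul_sum, Finset.sum_mul, ← Finset.sum_add_distrib,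
      Pi.mul_apply]
    refine Finset.sum_congr rfl fun i _ => ?_
    simp only [conjTranspose_add, conjTranspose_smul, star_trivial, add_mul, mul_add,
      mul_smul_comm, smul_mul_assoc]
    module
  rw [hsum]
  exact Finset.sum_nonneg fun i _ => star_left_conjugate_nonneg (G.map_nonneg (he i)) _

variable [Fintype n] [DecidableEq n] [Finite ι]

theorem exists_linearIsometryEquiv_apply_eq {E V : Type*} [AddCommGroup E] [Module 𝕜 E]
    [NormedAddCommGroup V] [InnerProductSpace 𝕜 V] [FiniteDimensional 𝕜 V] {S T : E →ₗ[𝕜] V}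
    (h : ∀ v, ‖S v‖ = ‖T v‖) : ∃ U : V ≃ₗᵢ[𝕜] V, ∀ v, U (S v) = T v := by
  obtain ⟨g, hg⟩ := S.rangeRestrict.exists_rightInverse_of_surjective S.range_rangeRestrict
  have S_g (w : S.range) : S (g w) = w := congrArg Subtype.val (LinearMap.congr_fun hg w)
  have T_g_S (v : E) : T (g (S.rangeRestrict v)) = T v := by
    rw [← sub_eq_zero, ← map_sub, ← norm_eq_zero, ← h, map_sub, S_g, LinearMap.codRestrict_apply,
      sub_self, norm_zero]
  let L : S.range →ₗᵢ[𝕜] V :=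
    { toLinearMap := T ∘ₗ g
      norm_map' := fun w => by rw [LinearMap.comp_apply, ← h, S_g, Submodule.coe_norm] }
  exact ⟨L.extend.toLinearIsometryEquiv rfl,
    fun v => (L.extend_apply (S.rangeRestrict v)).trans (T_g_S v)⟩

theorem exists_unitary_mul_eq {X Y : Matrix n n 𝕜} (h : Xᴴ * X = Yᴴ * Y) :
    ∃ U ∈ unitaryGroup n 𝕜, U * X = Y := by
  let e := toEuclideanCLM (n := n) (𝕜 := 𝕜)
  have norm_sq (Z : Matrix n n 𝕜) (v : EuclideanSpace 𝕜 n) :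
      ((‖e Z v‖ : 𝕜)) ^ 2 = inner 𝕜 v (e (Zᴴ * Z) v) := by
    rw [← inner_self_eq_norm_sq_to_K, map_mul, ← star_eq_conjTranspose, map_star,
      ContinuousLinearMap.star_eq_adjoint, mul_apply_eq_comp,
      ContinuousLinearMap.adjoint_inner_right]
  have norm_eq (v : EuclideanSpace 𝕜 n) : ‖e X v‖ = ‖e Y v‖ := by
    have := (norm_sq X v).trans (h ▸ (norm_sq Y v).symm)
    exact (pow_left_inj₀ (norm_nonneg _) (norm_nonneg _) two_ne_zero).1 (by exact_mod_cast this)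
  obtain ⟨U, hU⟩ := exists_linearIsometryEquiv_apply_eq
    (S := (e X).toLinearMap) (T := (e Y).toLinearMap) norm_eq
  let U' : unitary (EuclideanSpace 𝕜 n →L[𝕜] EuclideanSpace 𝕜 n) :=
    Unitary.linearIsometryEquiv.symm U
  have hU' : e (e.symm U' * X) = e Y := by
    rw [map_mul, StarAlgEquiv.apply_symm_apply]
    exact ContinuousLinearMap.ext hU
  exact ⟨e.symm U', Unitary.map_mem e.symm U'.2, e.injective hU'⟩

theorem exists_unitary_conjTranspose_mul_eq_abs (X : Matrix n n 𝕜) :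
    ∃ W ∈ unitaryGroup n 𝕜, Wᴴ * X = CFC.abs X := by
  have habs : (CFC.abs X)ᴴ * CFC.abs X = Xᴴ * X := by
    rw [← star_eq_conjTranspose, (CFC.abs_nonneg X).star_eq, CFC.abs_mul_abs,
      star_eq_conjTranspose]
  obtain ⟨U, hU, h⟩ := exists_unitary_mul_eq habs.symm
  exact ⟨Uᴴ, Unitary.star_mem hU, by rwa [conjTranspose_conjTranspose]⟩

theorem exists_ne_zero_forall_ne_apply_eq_zero {K : Type*} [Field K] (i : ι)
    (f : ι → (ι → K) →ₗ[K] K) : ∃ x ≠ 0, ∀ j ≠ i, f j x = 0 := by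
  classical
  cases nonempty_fintype ι
  have hcard : Module.finrank K ({j // j ≠ i} → K) < Module.finrank K (ι → K) := by
    rw [Module.finrank_fintype_fun_eq_card, Module.finrank_fintype_fun_eq_card]
    exact Fintype.card_subtype_lt (x := i) (by simp)
  obtain ⟨x, hx, hx0⟩ := Submodule.exists_mem_ne_zero_of_ne_bot
    (LinearMap.ker_ne_bot_of_finrank_lt (f := LinearMap.pi fun j : {j // j ≠ i} => f j) hcard)
  exact ⟨x, hx0, fun j hj => congrFun hx ⟨j, hj⟩⟩

theorem monovary_eigenvalues {M S : Matrix n n 𝕜} (hM : M.IsHermitian) (hS : S.IsHermitian) :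
    Monovary hM.eigenvalues hS.eigenvalues := fun _ _ h =>
  hM.eigenvalues₀_antitone (hS.eigenvalues₀_antitone.reflect_lt h).le

theorem dotProduct_sub_smul_one_mulVec {M : Matrix n n 𝕜} (hM : M.IsHermitian) (c : ℝ)
    (x : n → 𝕜) : star x ⬝ᵥ (M - c • (1 : Matrix n n 𝕜)) *ᵥ x =
      ((∑ j, (hM.eigenvalues j - c) *
        ‖(star (hM.eigenvectorUnitary : Matrix n n 𝕜) *ᵥ x) j‖ ^ 2 : ℝ) : 𝕜) := by
  set U := (hM.eigenvectorUnitary : Matrix n n 𝕜)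
  have hU : U * star U = 1 := Unitary.mul_star_self_of_mem hM.eigenvectorUnitary.2
  have hMc : M - c • (1 : Matrix n n 𝕜) =
      U * diagonal (fun j => ((hM.eigenvalues j - c : ℝ) : 𝕜)) * star U := by
    have hdiag : diagonal (fun j => ((hM.eigenvalues j - c : ℝ) : 𝕜)) =
        diagonal (RCLike.ofReal ∘ hM.eigenvalues) - c • (1 : Matrix n n 𝕜) := by
      ext i j
      by_cases h : i = j <;> simp [h, RCLike.real_smul_eq_coe_mul]
    rw [hdiag, mul_sub, sub_mul, mul_smul_comm, mul_one, smul_mul_assoc, hU]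
    exact congrArg (· - _) hM.spectral_theorem
  rw [hMc, ← mulVec_mulVec, ← mulVec_mulVec, dotProduct_mulVec,
    star_eq_conjTranspose, ← conjTranspose_conjTranspose U, ← star_mulVec,
    conjTranspose_conjTranspose]
  simp only [dotProduct, mulVec_diagonal, Pi.star_apply, RCLike.star_def, map_sum, map_mul]
  refine Finset.sum_congr rfl fun j _ => ?_
  rw [mul_left_comm, RCLike.conj_mul, map_pow]

theorem exists_dotProduct_mulVec_pos_and_nonpos {M S : Matrix n n 𝕜} (hM : M.IsHermitian)
    (hS : S.IsHermitian) (P : Matrix n n 𝕜) {c : ℝ} {i : n} (hMi : c < hM.eigenvalues i)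
    (hSi : hS.eigenvalues i ≤ c) :
    ∃ x, 0 < star x ⬝ᵥ (M - c • (1 : Matrix n n 𝕜)) *ᵥ x ∧
      star (P *ᵥ x) ⬝ᵥ (S - c • (1 : Matrix n n 𝕜)) *ᵥ (P *ᵥ x) ≤ 0 := by
  set U := (hM.eigenvectorUnitary : Matrix n n 𝕜) with hU
  set V := (hS.eigenvectorUnitary : Matrix n n 𝕜) with hV
  -- Both spectra are listed in the same decreasing order, so one equation for each `j ≠ i` suffices
  -- to kill the components of `x` below the `i`-th eigenvalue of `M` and those of `P *ᵥ x` above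
  -- the `i`-th eigenvalue of `S`.
  obtain ⟨x, hx0, hx⟩ := exists_ne_zero_forall_ne_apply_eq_zero i fun j =>
    if hM.eigenvalues j < hM.eigenvalues i
    then LinearMap.proj j ∘ₗ (star U).mulVecLin
    else LinearMap.proj j ∘ₗ (star V * P).mulVecLin
  have coord_M (j : n) (hj : hM.eigenvalues j < hM.eigenvalues i) : (star U *ᵥ x) j = 0 := by
    simpa [hj] using hx j (by rintro rfl; exact hj.false)
  have coord_S (j : n) (hj : hS.eigenvalues i < hS.eigenvalues j) :
      (star V *ᵥ P *ᵥ x) j = 0 := by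
    simpa [(monovary_eigenvalues hM hS hj).not_gt, mulVec_mulVec] using
      hx j (by rintro rfl; exact hj.false)
  obtain ⟨k, hk⟩ : ∃ k, (star U *ᵥ x) k ≠ 0 := by
    rw [← Function.ne_iff]
    intro h0
    apply hx0
    rw [← one_mulVec x, ← Unitary.mul_star_self_of_mem hM.eigenvectorUnitary.2, ← mulVec_mulVec,
      h0]
    exact mulVec_zero _
  refine ⟨x, ?_, ?_⟩
  · rw [dotProduct_sub_smul_one_mulVec hM, RCLike.ofReal_pos, ← hU]
    have term_nonneg (j : n) : 0 ≤ (hM.eigenvalues j - c) * ‖(star U *ᵥ x) j‖ ^ 2 := by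
      rcases lt_or_ge (hM.eigenvalues j) (hM.eigenvalues i) with hj | hj
      · simp [coord_M j hj]
      · exact mul_nonneg (by linarith) (sq_nonneg _)
    refine Finset.sum_pos' (fun j _ => term_nonneg j) ⟨k, Finset.mem_univ k, ?_⟩
    have hik : hM.eigenvalues i ≤ hM.eigenvalues k := not_lt.1 (mt (coord_M k) hk)
    exact mul_pos (by linarith) (pow_pos (norm_pos_iff.2 hk) 2)
  · rw [dotProduct_sub_smul_one_mulVec hS, ← hV]
    refine RCLike.ofReal_nonpos.2 (Finset.sum_nonpos fun j _ => ?_)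
    rcases le_or_gt (hS.eigenvalues j) (hS.eigenvalues i) with hj | hj
    · exact mul_nonpos_of_nonpos_of_nonneg (by linarith) (sq_nonneg _)
    · simp [coord_S j hj]

theorem lt_eigenvalues_of_smul_sub_le {M S P : Matrix n n 𝕜} (hM : M.IsHermitian)
    (hS : S.IsHermitian) {c β : ℝ} (hβ : 0 < β)
    (h : β • (M - c • (1 : Matrix n n 𝕜)) ≤ Pᴴ * (S - c • (1 : Matrix n n 𝕜)) * P) {i : n}
    (hi : c < hM.eigenvalues i) : c < hS.eigenvalues i := by
  by_contra! hSi
  obtain ⟨x, hpos, hneg⟩ := exists_dotProduct_mulVec_pos_and_nonpos hM hS P hi hSi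
  have hform := (le_iff.1 h).dotProduct_mulVec_nonneg x
  rw [sub_mulVec, dotProduct_sub, sub_nonneg, smul_mulVec, dotProduct_smul, ← mulVec_mulVec,
    ← mulVec_mulVec, dotProduct_mulVec _ Pᴴ, ← star_mulVec] at hform
  exact ((smul_pos hβ hpos).trans_le hform).not_ge hneg

theorem exists_unitary_le_conj_of_eigenvalues_le {M S : Matrix n n 𝕜} (hM : M.IsHermitian)
    (hS : S.IsHermitian) (h : ∀ i, hM.eigenvalues i ≤ hS.eigenvalues i) :
    ∃ U ∈ unitaryGroup n 𝕜, M ≤ U * S * Uᴴ := by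
  set U := (hM.eigenvectorUnitary : Matrix n n 𝕜)
  set V := (hS.eigenvectorUnitary : Matrix n n 𝕜)
  let D (N : Matrix n n 𝕜) (hN : N.IsHermitian) : Matrix n n 𝕜 :=
    diagonal (RCLike.ofReal ∘ hN.eigenvalues)
  have hD : D M hM ≤ D S hS := by
    rw [le_iff, diagonal_sub, posSemidef_diagonal_iff]
    exact fun i => sub_nonneg.2 (RCLike.ofReal_le_ofReal.2 (h i))
  have hDS : D S hS = Vᴴ * S * V := by
    have := hS.conjStarAlgAut_star_eigenvectorUnitary
    rw [Unitary.conjStarAlgAut_star_apply] at this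
    exact this.symm
  refine ⟨U * Vᴴ, mul_mem hM.eigenvectorUnitary.2 (Unitary.star_mem hS.eigenvectorUnitary.2), ?_⟩
  calc M = U * D M hM * Uᴴ := hM.spectral_theorem
    _ ≤ U * D S hS * Uᴴ := star_right_conjugate_le_conjugate hD U
    _ = (U * Vᴴ) * S * (U * Vᴴ)ᴴ := by
      simp only [hDS, conjTranspose_mul, conjTranspose_conjTranspose, mul_assoc]

theorem exists_unitary_le_conj {M S P : Matrix n n 𝕜} (hM : M.IsHermitian) (hS : S.PosSemidef)
    (h : ∀ c > (0 : ℝ), ∃ β > (0 : ℝ),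
      β • (M - c • (1 : Matrix n n 𝕜)) ≤ Pᴴ * (S - c • (1 : Matrix n n 𝕜)) * P) :
    ∃ U ∈ unitaryGroup n 𝕜, M ≤ U * S * Uᴴ := by
  refine exists_unitary_le_conj_of_eigenvalues_le hM hS.isHermitian fun i => ?_
  by_contra hi
  obtain ⟨c, hSc, hcM⟩ := exists_between (not_le.1 hi)
  obtain ⟨β, hβ, hle⟩ := h c ((hS.eigenvalues_nonneg i).trans_lt hSc)
  exact hSc.not_gt (lt_eigenvalues_of_smul_sub_le hM hS.isHermitian hβ hle hcM)

theorem smul_conjugate_sub_le_conjugate_sub {R : Type*} [Ring R] [StarRing R] [PartialOrder R]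
    [StarOrderedRing R] [Algebra ℝ R] [StarModule ℝ R] [PosSMulMono ℝ R] {P S T : R}
    (hP : IsSelfAdjoint P) {α β : ℝ} (hα : 0 ≤ α)
    (h : β • T + α • (P * P) ≤ S + (α * β) • (1 : R)) :
    β • (P * T * P - (α * β) • (1 : R)) ≤ P * (S - (α * β) • (1 : R)) * P := by
  have hdiff : IsSelfAdjoint (P * P - β • (1 : R)) :=
    ((hP.commute_iff hP).1 (.refl _)).sub (.smul (.all β) (.one _))
  have hlower : β • T + α • (P * P) - (2 * α * β) • (1 : R) ≤ S - (α * β) • (1 : R) := by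
    rw [← sub_nonneg] at h ⊢
    convert h using 1
    module
  calc β • (P * T * P - (α * β) • (1 : R))
      ≤ β • (P * T * P - (α * β) • (1 : R)) + α • ((P * P - β • (1 : R)) * (P * P - β • (1 : R))) :=
        le_add_of_nonneg_right (smul_nonneg hα hdiff.mul_self_nonneg)
    _ = P * (β • T + α • (P * P) - (2 * α * β) • (1 : R)) * P := by
        simp only [mul_sub, sub_mul, mul_add, add_mul, mul_smul_comm, smul_mul_assoc, mul_one,
          one_mul, mul_assoc]
        module
    _ ≤ P * (S - (α * β) • (1 : R)) * P := hP.conjugate_le_conjugate hlower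

theorem exists_separating_rpow {t u : ℝ} (ht : 0 ≤ t) (hu : 0 ≤ u) {c : ℝ} (hc : 0 < c) :
    ∃ α > 0, ∃ β > 0, α * β = c ∧ ∀ x : ℝ, 0 ≤ x → 0 ≤ (x ^ t - α) * (x ^ u - β) := by
  rcases (add_nonneg ht hu).eq_or_lt with h0 | hpos
  · obtain ⟨rfl, rfl⟩ := (add_eq_zero_iff_of_nonneg ht hu).1 h0.symm
    exact ⟨c, hc, 1, one_pos, mul_one c, fun x _ => by simp⟩
  have hμ : 0 < c ^ (t + u)⁻¹ := Real.rpow_pos_of_pos hc _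
  refine ⟨_, Real.rpow_pos_of_pos hμ t, _, Real.rpow_pos_of_pos hμ u, ?_, fun x hx => ?_⟩
  · rw [← Real.rpow_add hμ, Real.rpow_inv_rpow hc.le hpos.ne']
  · rcases le_total x (c ^ (t + u)⁻¹) with h | h
    · exact mul_nonneg_of_nonpos_of_nonpos (sub_nonpos.2 (Real.rpow_le_rpow hx h ht))
        (sub_nonpos.2 (Real.rpow_le_rpow hx h hu))
    · exact mul_nonneg (sub_nonneg.2 (Real.rpow_le_rpow hμ.le h ht))
        (sub_nonneg.2 (Real.rpow_le_rpow hμ.le h hu))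

section PositiveMap

variable {G : (ι → ℝ) →ₚ[ℝ] Matrix n n 𝕜}

theorem positiveLinearMap_mul_self_le (hG : G 1 ≤ 1) (f : ι → ℝ) : G f * G f ≤ G (f * f) := by
  have hf : (G f).IsHermitian := isHermitian_positiveLinearMap_apply G f
  have hblock := positiveLinearMap_block_nonneg G f 1 1 (-G f)
  have hone : G f * G 1 * G f ≤ G f * G f := by
    simpa using hf.isSelfAdjoint.conjugate_le_conjugate hG
  simp only [conjTranspose_one, conjTranspose_neg, hf.eq, mul_one, one_mul, neg_mul,
    mul_neg, neg_neg] at hblock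
  refine sub_nonneg.1 (hblock.trans ?_)
  rw [← sub_nonneg] at hone ⊢
  convert hone using 1
  abel

theorem exists_unitary_map_mul_map_mul_map_le (hG : G 1 ≤ 1) {f g : ι → ℝ} (hg : 0 ≤ g)
    (hfg : ∀ c > (0 : ℝ), ∃ α > 0, ∃ β > 0, α * β = c ∧
      ∀ i, 0 ≤ (g i - α) * (f i * f i - β)) :
    ∃ U ∈ unitaryGroup n 𝕜, G f * G g * G f ≤ U * G (g * (f * f)) * Uᴴ := by
  have hf : IsSelfAdjoint (G f) := isHermitian_positiveLinearMap_apply G f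
  have hgff : 0 ≤ G (g * (f * f)) :=
    G.map_nonneg (mul_nonneg hg fun i => mul_self_nonneg (f i))
  refine exists_unitary_le_conj (P := G f) (hf.conjugate_nonneg (G.map_nonneg hg)).isSelfAdjoint
    (nonneg_iff_posSemidef.1 hgff) fun c hc => ?_
  obtain ⟨α, hα, β, hβ, rfl, hsep⟩ := hfg c hc
  have hlower : β • G g + α • G (f * f) ≤ G (g * (f * f)) + (α * β) • G 1 := by
    simp only [← map_smul, ← map_add]
    refine OrderHomClass.mono G fun i => ?_
    simp only [Pi.add_apply, Pi.smul_apply, Pi.mul_apply, Pi.one_apply, smul_eq_mul]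
    linarith [hsep i]
  refine ⟨β, hβ, ?_⟩
  rw [← star_eq_conjTranspose, hf.star_eq]
  refine smul_conjugate_sub_le_conjugate_sub hf hα.le ?_
  calc β • G g + α • (G f * G f) ≤ β • G g + α • G (f * f) := by
        gcongr
        exact positiveLinearMap_mul_self_le hG f
    _ ≤ G (g * (f * f)) + (α * β) • G 1 := hlower
    _ ≤ G (g * (f * f)) + (α * β) • 1 := by gcongr

variable (G) in
theorem exists_unitary_two_smul_abs_le (f g : ι → ℝ) (P Q : Matrix n n 𝕜) :
    ∃ W ∈ unitaryGroup n 𝕜, (2 : ℝ) • CFC.abs (Pᴴ * G (f * g) * Q) ≤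
      W * (Pᴴ * G (f * f) * P) * Wᴴ + Qᴴ * G (g * g) * Q := by
  obtain ⟨W, hW, habs⟩ := exists_unitary_conjTranspose_mul_eq_abs (Pᴴ * G (f * g) * Q)
  have habs' : (Pᴴ * G (f * g) * Q)ᴴ * W = CFC.abs (Pᴴ * G (f * g) * Q) := by
    rw [← (CFC.abs_nonneg (Pᴴ * G (f * g) * Q)).star_eq, ← habs, star_eq_conjTranspose,
      conjTranspose_mul Wᴴ, conjTranspose_conjTranspose]
  refine ⟨Wᴴ, Unitary.star_mem hW, ?_⟩
  rw [← sub_nonneg, two_smul]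
  nth_rw 1 [← habs]
  rw [← habs']
  convert positiveLinearMap_block_nonneg G f g (P * W) (-Q) using 1
  simp only [conjTranspose_mul, conjTranspose_neg, conjTranspose_conjTranspose,
    (isHermitian_positiveLinearMap_apply G _).eq, mul_neg, neg_mul, neg_neg, mul_assoc]
  abel

theorem exists_unitary_map_rpow_conj_le (hG : G 1 ≤ 1) {l : ι → ℝ} (hl : 0 ≤ l) {s t : ℝ}
    (hs : 0 ≤ s) (ht : 0 ≤ t) :
    ∃ U ∈ unitaryGroup n 𝕜, G (l · ^ s) * G (l · ^ t) * G (l · ^ s) ≤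
      U * G (l · ^ (s + t + s)) * Uᴴ := by
  have hss (i : ι) : l i ^ s * l i ^ s = l i ^ (s + s) :=
    (Real.rpow_add_of_nonneg (hl i) hs hs).symm
  have hmul : (l · ^ (s + t + s)) = (l · ^ t) * ((l · ^ s) * (l · ^ s)) := by
    funext i
    simp only [Pi.mul_apply, hss, ← Real.rpow_add_of_nonneg (hl i) ht (add_nonneg hs hs)]
    ring_nf
  rw [hmul]
  refine exists_unitary_map_mul_map_mul_map_le hG (fun i => Real.rpow_nonneg (hl i) t)
    fun c hc => ?_
  obtain ⟨α, hα, β, hβ, hαβ, hsep⟩ := exists_separating_rpow ht (add_nonneg hs hs) hc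
  exact ⟨α, hα, β, hβ, hαβ, fun i => (hss i).symm ▸ hsep (l i) (hl i)⟩

theorem exists_unitaries_abs_map_rpow_le (hG : G 1 ≤ 1) {l : ι → ℝ} (hl : 0 ≤ l) {p q r : ℝ}
    (hp : 0 ≤ p) (hr : 0 ≤ r) (hpqr : p ≤ q + r) (hrpq : r ≤ p + q) :
    ∃ U ∈ unitaryGroup n 𝕜, ∃ V ∈ unitaryGroup n 𝕜,
      (2 : ℝ) • CFC.abs (G (l · ^ p) * G (l · ^ q) * G (l · ^ r)) ≤
        U * G (l · ^ (p + q + r)) * Uᴴ + V * G (l · ^ (p + q + r)) * Vᴴ := by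
  have hmul {s t u : ℝ} (hs : 0 ≤ s) (ht : 0 ≤ t) (hu : s + t = u) :
      (l · ^ s) * (l · ^ t) = (l · ^ u) :=
    funext fun i => hu ▸ (Real.rpow_add_of_nonneg (hl i) hs ht).symm
  have ha : 0 ≤ (q + r - p) / 2 := by linarith
  have hb : 0 ≤ (p + q - r) / 2 := by linarith
  obtain ⟨W, hW, hX⟩ := exists_unitary_two_smul_abs_le G (l · ^ ((q + r - p) / 2))
    (l · ^ ((p + q - r) / 2)) (G (l · ^ p)) (G (l · ^ r))
  obtain ⟨U, hU, hpU⟩ := exists_unitary_map_rpow_conj_le hG hl hp (sub_nonneg.2 hpqr)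
  obtain ⟨V, hV, hrV⟩ := exists_unitary_map_rpow_conj_le hG hl hr (sub_nonneg.2 hrpq)
  rw [show p + (q + r - p) + p = p + q + r by ring] at hpU
  rw [show r + (p + q - r) + r = p + q + r by ring] at hrV
  rw [hmul ha hb (show _ = q by ring), hmul ha ha (add_halves _), hmul hb hb (add_halves _),
    (isHermitian_positiveLinearMap_apply G _).eq,
    (isHermitian_positiveLinearMap_apply G _).eq] at hX
  refine ⟨W * U, mul_mem hW hU, V, hV, hX.trans (add_le_add ?_ hrV)⟩
  simpa only [star_eq_conjTranspose, conjTranspose_mul, mul_assoc] using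
    star_right_conjugate_le_conjugate hpU W

end PositiveMap

theorem exists_positiveLinearMap_comp_eigenvalues_eq_cfc {A : Matrix n n 𝕜} (hA : A.IsHermitian) :
    ∃ D : (n → ℝ) →ₚ[ℝ] Matrix n n 𝕜, D 1 = 1 ∧
      ∀ f : ℝ → ℝ, D (f ∘ hA.eigenvalues) = cfc f A := by
  let D : (n → ℝ) →ₐ[ℝ] Matrix n n 𝕜 :=
    (Unitary.conjStarAlgAut ℝ (Matrix n n 𝕜) hA.eigenvectorUnitary).toAlgEquiv.toAlgHom.comp
      ((diagonalAlgHom ℝ).comp (RCLike.ofRealAm.compLeft n))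
  have D_nonneg (f : n → ℝ) (hf : 0 ≤ f) : 0 ≤ D.toLinearMap f :=
    star_right_conjugate_nonneg
      (PosSemidef.diagonal fun i => RCLike.ofReal_nonneg.2 (hf i)).nonneg _
  exact ⟨.mk₀ D.toLinearMap D_nonneg, map_one D, fun f => (hA.cfc_eq f).symm⟩

theorem matAbs_eq_abs {k : ℕ} (X : Matrix (Fin k) (Fin k) ℂ) : matAbs X = CFC.abs X :=
  ((CFC.sqrt_eq_real_sqrt _ (star_mul_self_nonneg X)).trans cfcₙ_eq_cfc).symm

theorem mpow_eq_rpow {k : ℕ} {A : Matrix (Fin k) (Fin k) ℂ} (hA : 0 ≤ A) (p : ℝ) :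
    mpow A p = A ^ p := (CFC.rpow_eq_cfc_real hA).symm

theorem triple_product_two_unitaries_general {m : Type*} [Fintype m] [DecidableEq m]
    (Φ : Matrix m m 𝕜 →ₚ[ℝ] Matrix n n 𝕜) (hΦ1 : Φ 1 ≤ 1) {A : Matrix m m 𝕜}
    (hA : 0 ≤ A) {p q r : ℝ} (hp : 0 ≤ p) (hr : 0 ≤ r) (hpqr : p ≤ q + r)
    (hrpq : r ≤ p + q) :
    ∃ U V : Matrix n n 𝕜, U ∈ unitaryGroup n 𝕜 ∧ V ∈ unitaryGroup n 𝕜 ∧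
      CFC.abs (Φ (A ^ p) * Φ (A ^ q) * Φ (A ^ r)) ≤
        (2 : 𝕜)⁻¹ • (U * Φ (A ^ (p + q + r)) * Uᴴ + V * Φ (A ^ (p + q + r)) * Vᴴ) := by
  have hA' : A.PosSemidef := nonneg_iff_posSemidef.1 hA
  obtain ⟨D, hD1, hD⟩ := exists_positiveLinearMap_comp_eigenvalues_eq_cfc hA'.isHermitian
  let G := Φ.comp D
  have hG1 : G 1 ≤ 1 := (congrArg Φ hD1).trans_le hΦ1
  have hG (t : ℝ) : G (hA'.isHermitian.eigenvalues · ^ t) = Φ (A ^ t) :=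
    congrArg Φ ((hD _).trans (CFC.rpow_eq_cfc_real hA).symm)
  obtain ⟨U, hU, V, hV, h⟩ :=
    exists_unitaries_abs_map_rpow_le hG1 hA'.eigenvalues_nonneg hp hr hpqr hrpq
  simp only [hG] at h
  refine ⟨U, V, hU, hV, ?_⟩
  have hhalf := smul_le_smul_of_nonneg_left h (inv_nonneg.2 (zero_le_two (α := ℝ)))
  rw [inv_smul_smul₀ two_ne_zero, ← algebraMap_smul 𝕜] at hhalf
  simpa only [map_inv₀, map_ofNat] using hhalf

end

/-- For a unital positive linear map `Φ`, `A ≥ 0` and `p, q, r ≥ 0` with `q ≥ p` and `q ≥ r`,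
there are unitaries `U, V` with
`|Φ(A^p) Φ(A^q) Φ(A^r)| ≤ (U Φ(A^{p+q+r}) U* + V Φ(A^{p+q+r}) V*)/2`. -/
theorem triple_product_two_unitaries {n d : ℕ}
    (Φ : Matrix (Fin n) (Fin n) ℂ →ₗ[ℂ] Matrix (Fin d) (Fin d) ℂ)
    (hΦ1 : Φ 1 = 1) (hΦpos : ∀ X : Matrix (Fin n) (Fin n) ℂ, X.PosSemidef → (Φ X).PosSemidef)
    (A : Matrix (Fin n) (Fin n) ℂ) (hA : A.PosSemidef)
    (p q r : ℝ) (hp : 0 ≤ p) (hq : 0 ≤ q) (hr : 0 ≤ r) (hpq : p ≤ q) (hrq : r ≤ q) :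
    ∃ U V : Matrix (Fin d) (Fin d) ℂ, U ∈ Matrix.unitaryGroup (Fin d) ℂ ∧
      V ∈ Matrix.unitaryGroup (Fin d) ℂ ∧
      loewnerLE (matAbs (Φ (mpow A p) * Φ (mpow A q) * Φ (mpow A r)))
        ((2 : ℂ)⁻¹ • (U * Φ (mpow A (p + q + r)) * Uᴴ + V * Φ (mpow A (p + q + r)) * Vᴴ)) := by
  simp only [mpow_eq_rpow hA.nonneg, matAbs_eq_abs, loewnerLE]
  open scoped MatrixOrder in
  exact triple_product_two_unitaries_general
    (.mk₀ (Φ.restrictScalars ℝ) fun X hX => (hΦpos X (Matrix.nonneg_iff_posSemidef.1 hX)).nonneg)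
    hΦ1.le hA.nonneg hp hr (by linarith) (by linarith)
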